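/- arXiv:1103.4740 — 4 statements merged into one kernel-verified Lean document; each statement's English description precedes it below -/
import Mathlib

section
/- Let K be a cubic number field (a number field of degree 3 over ℚ). Then every two times monogenic order in K is of type I. -/
open NumberField

/-- An order in a number field `K`: a subring of the ring of integers `𝓞 K`
whose quotient field equals `K`. -/
def IsOrder (K : Type*) [Field K] [NumberField K] (O : Subring (𝓞 K)) : Prop :=
  ∀ x : K, ∃ a ∈ O, ∃ b ∈ O, b ≠ 0 ∧
    x = algebraMap (𝓞 K) K a / algebraMap (𝓞 K) K b

/-- Two elements `α, β` of `𝓞 K` are ℤ-equivalent if `β = u * α + a` for some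
`u ∈ {1, -1}` and `a ∈ ℤ`. -/
def ZEquiv (K : Type*) [Field K] [NumberField K] (α β : 𝓞 K) : Prop :=
  ∃ u a : ℤ, (u = 1 ∨ u = -1) ∧ β = (u : 𝓞 K) * α + (a : 𝓞 K)

/-- An order `O` is `k` times monogenic if there are at least `k` pairwise
ℤ-inequivalent elements `α ∈ O` with `ℤ[α] = O`. -/
def TimesMonogenic (K : Type*) [Field K] [NumberField K] (k : ℕ) (O : Subring (𝓞 K)) : Prop :=
  ∃ f : Fin k → 𝓞 K, (∀ i j, i ≠ j → ¬ ZEquiv K (f i) (f j)) ∧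
    ∀ i, Subring.closure {f i} = O

/-- An order `O` in a number field `K` of degree at least 3 is of type I if there are
`α, β ∈ O` and a matrix `(a1 a2; a3 a4) ∈ GL(2, ℤ)` such that `K = ℚ(α)`,
`O = ℤ[α] = ℤ[β]`, `β = (a1·α + a2)/(a3·α + a4)` and `a3 ≠ 0`. -/
def IsTypeI (K : Type*) [Field K] [NumberField K] (O : Subring (𝓞 K)) : Prop :=
  ∃ α β : 𝓞 K, α ∈ O ∧ β ∈ O ∧ ∃ M : Matrix (Fin 2) (Fin 2) ℤ, IsUnit M.det ∧
    Algebra.adjoin ℚ {algebraMap (𝓞 K) K α} = ⊤ ∧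
    Subring.closure {α} = O ∧ Subring.closure {β} = O ∧
    M 1 0 ≠ 0 ∧
    (M 1 0 : K) * algebraMap (𝓞 K) K α + (M 1 1 : K) ≠ 0 ∧
    algebraMap (𝓞 K) K β =
      ((M 0 0 : K) * algebraMap (𝓞 K) K α + (M 0 1 : K)) /
      ((M 1 0 : K) * algebraMap (𝓞 K) K α + (M 1 1 : K))

/-!
Let `1, α, α²` and `1, β, β²` be two bases of a cubic order, with `α³ = p α² + q α + r` and
`β = a + b α + c α²`. The product `β (c α - (b + c p))` has no `α²`-term, so `β` is a Möbius
transform of `α` with integral coefficients. The determinant of the resulting `2 × 2` matrix is the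
index form of `α` at `β`, that is, the determinant of the change of basis from `1, α, α²` to
`1, β, β²`, hence a unit. If the lower left entry `c` vanished, `β` would be `±α` plus an integer.
-/

section MobiusMatrix

variable {R S : Type*} [CommRing R] [CommRing S] [Algebra R S] {α β : S}

/-- The matrix of the Möbius transformation which takes a root `α` of `X³ - p X² - q X - r` to
`a + b α + c α²`, acting as `α ↦ (M₀₀ α + M₀₁) / (M₁₀ α + M₁₁)`. -/
def mobiusMatrix (p q r a b c : R) : Matrix (Fin 2) (Fin 2) R :=
  !![c ^ 2 * q - b * (b + c * p) + a * c, c ^ 2 * r - a * (b + c * p); c, -(b + c * p)]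

/-- `β` is the image of `α` under the Möbius transformation with matrix `M`. The denominator is
cleared, so that the notion makes sense in an arbitrary commutative algebra. -/
def IsMobiusImage (M : Matrix (Fin 2) (Fin 2) R) (α β : S) : Prop :=
  β * (algebraMap R S (M 1 0) * α + algebraMap R S (M 1 1)) =
    algebraMap R S (M 0 0) * α + algebraMap R S (M 0 1)

lemma isMobiusImage_mobiusMatrix {p q r : R}
    (hα : α ^ 3 = algebraMap R S r + algebraMap R S q * α + algebraMap R S p * α ^ 2) (a b c : R) :
    IsMobiusImage (mobiusMatrix p q r a b c) α
      (algebraMap R S a + algebraMap R S b * α + algebraMap R S c * α ^ 2) := by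
  simp only [IsMobiusImage, mobiusMatrix, Matrix.of_apply, Matrix.cons_val', Matrix.cons_val_zero,
    Matrix.cons_val_one, Matrix.cons_val_fin_one, map_add, map_sub, map_neg, map_mul, map_pow]
  linear_combination algebraMap R S c ^ 2 * hα

lemma IsMobiusImage.map {T : Type*} [CommRing T] [Algebra R T] {M : Matrix (Fin 2) (Fin 2) R}
    (h : IsMobiusImage M α β) (f : S →ₐ[R] T) : IsMobiusImage M (f α) (f β) := by
  simpa only [IsMobiusImage, map_mul, map_add, AlgHom.commutes] using congrArg f h

lemma IsMobiusImage.denom_ne_zero [Nontrivial S] {M : Matrix (Fin 2) (Fin 2) R}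
    (h : IsMobiusImage M α β) (hM : IsUnit M.det) :
    algebraMap R S (M 1 0) * α + algebraMap R S (M 1 1) ≠ 0 := by
  intro hdenom
  have hnum : algebraMap R S (M 0 0) * α + algebraMap R S (M 0 1) = 0 := by
    rw [← h, hdenom, mul_zero]
  refine (hM.map (algebraMap R S)).ne_zero ?_
  rw [Matrix.det_fin_two, map_sub, map_mul, map_mul]
  linear_combination algebraMap R S (M 0 0) * hdenom - algebraMap R S (M 1 0) * hnum

end MobiusMatrix

section PowerBasis

variable {R S : Type*} [CommRing R] [CommRing S] [Algebra R S] {α β : S}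

lemma exists_basis_pow_of_adjoin_eq_top [IsDomain R] [IsIntegrallyClosed R] [IsDomain S]
    [Module.IsTorsionFree R S] {n : ℕ} (hn : Module.finrank R S = n) (hint : IsIntegral R α)
    (hα : Algebra.adjoin R {α} = ⊤) :
    ∃ e : Module.Basis (Fin n) R S, ∀ i, e i = α ^ (i : ℕ) := by
  let B := PowerBasis.ofAdjoinEqTop' hint hα
  refine ⟨B.basis.reindex (finCongr (B.finrank.symm.trans hn)), fun i ↦ ?_⟩
  rw [Module.Basis.reindex_apply, B.basis_eq_pow, PowerBasis.ofAdjoinEqTop'_gen, finCongr_symm,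
    finCongr_apply, Fin.val_cast]

lemma equivFun_symm_of_eq_pow {e : Module.Basis (Fin 3) R S} (he : ∀ i, e i = α ^ (i : ℕ))
    (x : Fin 3 → R) :
    e.equivFun.symm x =
      algebraMap R S (x 0) + algebraMap R S (x 1) * α + algebraMap R S (x 2) * α ^ 2 := by
  simp [Module.Basis.equivFun_symm_apply, Fin.sum_univ_three, he, Algebra.smul_def]

lemma exists_eq_quadratic {e : Module.Basis (Fin 3) R S} (he : ∀ i, e i = α ^ (i : ℕ)) (x : S) :
    ∃ a b c : R, x = algebraMap R S a + algebraMap R S b * α + algebraMap R S c * α ^ 2 :=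
  ⟨_, _, _, (e.equivFun.symm_apply_apply x).symm.trans (equivFun_symm_of_eq_pow he _)⟩

lemma repr_quadratic {e : Module.Basis (Fin 3) R S} (he : ∀ i, e i = α ^ (i : ℕ)) (x y z : R)
    (i : Fin 3) :
    e.repr (algebraMap R S x + algebraMap R S y * α + algebraMap R S z * α ^ 2) i =
      ![x, y, z] i := by
  have h := equivFun_symm_of_eq_pow he ![x, y, z]
  simp only [Matrix.cons_val] at h
  rw [← h, ← e.equivFun_apply, LinearEquiv.apply_symm_apply]

lemma det_pow_quadratic_eq_det_mobiusMatrix {e : Module.Basis (Fin 3) R S}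
    (he : ∀ i, e i = α ^ (i : ℕ)) {p q r : R}
    (hα : α ^ 3 = algebraMap R S r + algebraMap R S q * α + algebraMap R S p * α ^ 2) (a b c : R) :
    e.det (fun i : Fin 3 ↦
        (algebraMap R S a + algebraMap R S b * α + algebraMap R S c * α ^ 2) ^ (i : ℕ)) =
      (mobiusMatrix p q r a b c).det := by
  set β := algebraMap R S a + algebraMap R S b * α + algebraMap R S c * α ^ 2 with hβ
  have hone : (1 : S) = algebraMap R S 1 + algebraMap R S 0 * α + algebraMap R S 0 * α ^ 2 := by
    simp
  have hsq : β ^ 2 = algebraMap R S (a ^ 2 + 2 * b * c * r + c ^ 2 * p * r) +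
      algebraMap R S (2 * a * b + 2 * b * c * q + c ^ 2 * (p * q + r)) * α +
      algebraMap R S (b ^ 2 + 2 * a * c + 2 * b * c * p + c ^ 2 * (p ^ 2 + q)) * α ^ 2 := by
    simp only [hβ, map_add, map_mul, map_pow, map_ofNat]
    linear_combination (2 * algebraMap R S b * algebraMap R S c + algebraMap R S c ^ 2 * α +
      algebraMap R S c ^ 2 * algebraMap R S p) * hα
  rw [Module.Basis.det_apply, Matrix.det_fin_three]
  simp only [Module.Basis.toMatrix_apply, Fin.val_zero, Fin.val_one, Fin.val_two, pow_zero,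
    pow_one, hone]
  rw [hsq]
  simp only [hβ, repr_quadratic he, mobiusMatrix, Matrix.det_fin_two_of, Matrix.cons_val]
  ring

theorem exists_isMobiusImage_of_pow_bases {e e' : Module.Basis (Fin 3) R S}
    (he : ∀ i, e i = α ^ (i : ℕ)) (he' : ∀ i, e' i = β ^ (i : ℕ)) :
    ∃ M : Matrix (Fin 2) (Fin 2) R, IsUnit M.det ∧ IsMobiusImage M α β := by
  obtain ⟨r, q, p, hα⟩ := exists_eq_quadratic he (α ^ 3)
  obtain ⟨a, b, c, rfl⟩ := exists_eq_quadratic he β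
  refine ⟨mobiusMatrix p q r a b c, ?_, isMobiusImage_mobiusMatrix hα a b c⟩
  rw [← det_pow_quadratic_eq_det_mobiusMatrix he hα, ← funext he']
  exact e.isUnit_det e'

end PowerBasis

section Order

lemma adjoin_int_eq_top_of_closure_eq {A : Type*} [Ring A] {O : Subring A} {a : O}
    (ha : Subring.closure {(a : A)} = O) : Algebra.adjoin ℤ {a} = ⊤ := by
  have hclosure : Subring.closure {a} = ⊤ := by
    rw [← Subring.comap_map_eq_self_of_injective O.subtype_injective (Subring.closure {a}),
      RingHom.map_closure, Set.image_singleton, O.subtype_apply, ha]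
    exact (Subring.eq_top_iff' _).2 fun x ↦ x.2
  rw [Algebra.adjoin_int, hclosure]
  rfl

lemma adjoin_algebraMap_image_eq_top (A F B L : Type*) [CommRing A] [Field F] [CommRing B]
    [Field L] [Algebra A F] [Algebra A B] [Algebra A L] [Algebra B L] [Algebra F L]
    [IsScalarTower A F L] [IsScalarTower A B L] [IsFractionRing B L] [Algebra.IsAlgebraic F L]
    {s : Set B} (hs : Algebra.adjoin A s = ⊤) :
    Algebra.adjoin F (algebraMap B L '' s) = ⊤ := by
  set T := Algebra.adjoin F (algebraMap B L '' s)
  have hle : Algebra.adjoin A s ≤ (T.restrictScalars A).comap (IsScalarTower.toAlgHom A B L) :=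
    Algebra.adjoin_le fun x hx ↦ Algebra.subset_adjoin (Set.mem_image_of_mem _ hx)
  have hmem (b : B) : algebraMap B L b ∈ T := hle (hs ▸ Algebra.mem_top)
  refine Algebra.eq_top_iff.2 fun x ↦ ?_
  obtain ⟨b, d, -, rfl⟩ := IsFractionRing.div_surjective (A := B) x
  rw [div_eq_mul_inv]
  exact T.mul_mem (hmem b)
    (T.inv_mem_of_algebraic (x := ⟨_, hmem d⟩) (Algebra.IsAlgebraic.isAlgebraic _))

variable {K : Type*} [Field K] [NumberField K] {O : Subring (𝓞 K)} {α β : 𝓞 K}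

lemma IsOrder.isFractionRing (hO : IsOrder K O) : IsFractionRing O K :=
  IsFractionRing.of_field O K fun x ↦
    let ⟨a, ha, b, hb, _, hx⟩ := hO x
    ⟨⟨a, ha⟩, ⟨b, hb⟩, hx⟩

lemma IsOrder.finrank_eq (hO : IsOrder K O) : Module.finrank ℤ O = Module.finrank ℚ K :=
  have := hO.isFractionRing
  (IsFractionRing.finrank_eq ℤ ℚ O K).symm

lemma IsOrder.adjoin_rat_eq_top (hO : IsOrder K O) (hα : Subring.closure {α} = O) :
    Algebra.adjoin ℚ {algebraMap (𝓞 K) K α} = ⊤ := by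
  have := hO.isFractionRing
  lift α to O using hα ▸ Subring.mem_closure_of_mem (Set.mem_singleton α)
  rw [← adjoin_algebraMap_image_eq_top ℤ ℚ O K (adjoin_int_eq_top_of_closure_eq hα),
    Set.image_singleton]
  rfl

lemma exists_basis_pow_of_closure_eq {n : ℕ} (hn : Module.finrank ℤ O = n) {a : O}
    (ha : Subring.closure {(a : 𝓞 K)} = O) :
    ∃ e : Module.Basis (Fin n) ℤ O, ∀ i, e i = a ^ (i : ℕ) :=
  exists_basis_pow_of_adjoin_eq_top hn
    ((isIntegral_algHom_iff O.subtype.toIntAlgHom O.subtype_injective).1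
      (RingOfIntegers.isIntegral (a : 𝓞 K)))
    (adjoin_int_eq_top_of_closure_eq ha)

theorem IsOrder.exists_isMobiusImage (hO : IsOrder K O) (hd : Module.finrank ℚ K = 3)
    (hα : Subring.closure {α} = O) (hβ : Subring.closure {β} = O) :
    ∃ M : Matrix (Fin 2) (Fin 2) ℤ, IsUnit M.det ∧ IsMobiusImage M α β := by
  lift α to O using hα ▸ Subring.mem_closure_of_mem (Set.mem_singleton α)
  lift β to O using hβ ▸ Subring.mem_closure_of_mem (Set.mem_singleton β)
  have hrank : Module.finrank ℤ O = 3 := hO.finrank_eq.trans hd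
  obtain ⟨e, he⟩ := exists_basis_pow_of_closure_eq hrank hα
  obtain ⟨e', he'⟩ := exists_basis_pow_of_closure_eq hrank hβ
  obtain ⟨M, hM, h⟩ := exists_isMobiusImage_of_pow_bases he he'
  exact ⟨M, hM, h.map O.subtype.toIntAlgHom⟩

lemma IsMobiusImage.zEquiv {M : Matrix (Fin 2) (Fin 2) ℤ} (h : IsMobiusImage M α β)
    (hM : IsUnit M.det) (hM₁₀ : M 1 0 = 0) : ZEquiv K α β := by
  rw [Matrix.det_fin_two, hM₁₀, mul_zero, sub_zero] at hM
  have hM₁₁ : ((M 1 1 : ℤ) : 𝓞 K) * M 1 1 = 1 := by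
    exact_mod_cast Int.isUnit_mul_self (isUnit_of_mul_isUnit_right hM)
  refine ⟨M 0 0 * M 1 1, M 0 1 * M 1 1, Int.isUnit_iff.1 hM, ?_⟩
  simp only [IsMobiusImage, hM₁₀, map_zero, zero_mul, zero_add, algebraMap_int_eq,
    eq_intCast] at h
  push_cast
  linear_combination (M 1 1 : 𝓞 K) * h - β * hM₁₁

end Order

/-- Let `K` be a cubic number field. Then every two times monogenic order in `K`
is of type I. -/
theorem cubic_two_times_monogenic_is_typeI (K : Type*) [Field K] [NumberField K]
    (hd : Module.finrank ℚ K = 3) (O : Subring (𝓞 K))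
    (hO : IsOrder K O) (h2 : TimesMonogenic K 2 O) : IsTypeI K O := by
  obtain ⟨f, hne, hgen⟩ := h2
  obtain ⟨M, hM, h⟩ := hO.exists_isMobiusImage hd (hgen 0) (hgen 1)
  have hM₁₀ : M 1 0 ≠ 0 := fun h₁₀ ↦ hne 0 1 zero_ne_one (h.zEquiv hM h₁₀)
  have hK := h.map (IsScalarTower.toAlgHom ℤ (𝓞 K) K)
  have hmem (i : Fin 2) : f i ∈ O := hgen i ▸ Subring.mem_closure_of_mem (Set.mem_singleton _)
  exact ⟨f 0, f 1, hmem 0, hmem 1, M, hM, hO.adjoin_rat_eq_top (hgen 0), hgen 0, hgen 1, hM₁₀,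
    hK.denom_ne_zero hM, eq_div_of_mul_eq (hK.denom_ne_zero hM) hK⟩
end

section
/- Let A be a domain with quotient field L of characteristic 0 which is integrally closed in L and finitely generated over ℤ as a ℤ-algebra, let G be a finite extension of L, and let A_G be the integral closure of A in G. Then the group A_G* of units (invertible elements) of A_G is finitely generated. -/
/-!
Let `U` be a group of elements of `F` which are integral over `A` together with their inverses.
Only finitely many primes of a Dedekind domain `D` with fraction field `F` are poles of some
element of the finitely generated ring `A`, and at every other prime the elements of `U` have
valuation `1`. The valuations at these finitely many primes therefore map `U` to a finitely
generated group, and the kernel consists of units of `D`.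

When `F` is a number field, take for `D` the ring of integers and apply Dirichlet's unit theorem.
When `F` is finite over `K(x)`, take for `D` the integral closures of `K[x]` and of `K[x⁻¹]` in `F`:
what is left of `U` is integral over both, hence over `K`. These constants inject into the units of
a residue field of a finitely generated `K`-algebra, which is finite over `K`. So finite generation
passes from the finite extensions of `K` to those of `K(x)`, and one inducts on the number of
generators of the field.
-/

open IsDedekindDomain
open scoped IntermediateField IntermediateField.algebraAdjoinAdjoin

section Groups

variable {G N : Type*} [CommGroup G] [CommGroup N]

theorem subgroup_fg_iff_toIntSubmodule_fg {U : Subgroup G} :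
    U.FG ↔ (AddSubgroup.toIntSubmodule U.toAddSubgroup).FG := by
  rw [Subgroup.fg_iff_add_fg, Submodule.fg_iff_addSubgroup_fg]
  rfl

theorem subgroup_fg_of_le {U V : Subgroup G} (hV : V.FG) (hUV : U ≤ V) : U.FG :=
  subgroup_fg_iff_toIntSubmodule_fg.2 <|
    (subgroup_fg_iff_toIntSubmodule_fg.1 hV).of_le fun _ hu => hUV hu

theorem subgroup_fg_of_map_of_inf_ker {U : Subgroup G} (f : G →* N) (hmap : (U.map f).FG)
    (hker : (U ⊓ f.ker).FG) : U.FG := by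
  rw [subgroup_fg_iff_toIntSubmodule_fg] at hmap hker ⊢
  exact Submodule.fg_of_fg_map_of_fg_inf_ker f.toAdditive.toIntLinearMap hmap hker

end Groups

theorem subgroup_fg_map {G N : Type*} [Group G] [Group N] {U : Subgroup G} (hU : U.FG)
    (f : G →* N) : (U.map f).FG :=
  (Subgroup.fg_iff_submonoid_fg _).2 (((Subgroup.fg_iff_submonoid_fg _).1 hU).map f)

section IntegralUnits

variable {A B C : Type*} [CommRing A] [CommRing B] [Algebra A B] [CommRing C] [Algebra A C]

variable (A B) in
/-- The units of `B` which are integral over `A` together with their inverses: the unit group of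
`integralClosure A B`, realised inside `Bˣ` so that different base rings can be compared. -/
def integralUnits : Subgroup Bˣ :=
  (integralClosure A B).toSubmonoid.units

theorem mem_integralUnits {u : Bˣ} :
    u ∈ integralUnits A B ↔ IsIntegral A (u : B) ∧ IsIntegral A (↑u⁻¹ : B) :=
  Iff.rfl

theorem integralUnits_fg_iff :
    (integralUnits A B).FG ↔ Group.FG (integralClosure A B)ˣ := by
  let e : integralUnits A B ≃* (integralClosure A B)ˣ :=
    (integralClosure A B).toSubmonoid.unitsEquivUnitsType
  rw [← Group.fg_iff_subgroup_fg]
  exact ⟨fun _ => Group.fg_of_surjective (f := e.toMonoidHom) e.surjective,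
    fun _ => Group.fg_of_surjective (f := e.symm.toMonoidHom) e.symm.surjective⟩

theorem map_integralUnits_le (f : B →ₐ[A] C) :
    (integralUnits A B).map (Units.map (f : B →* C)) ≤ integralUnits A C := by
  rintro _ ⟨u, hu, rfl⟩
  exact ⟨hu.1.map f, hu.2.map f⟩

theorem unitsMap_mem_integralUnits_iff {f : B →ₐ[A] C} (hf : Function.Injective f) {u : Bˣ} :
    Units.map (f : B →* C) u ∈ integralUnits A C ↔ u ∈ integralUnits A B := by
  rw [mem_integralUnits, mem_integralUnits]
  exact and_congr (isIntegral_algHom_iff f hf) (isIntegral_algHom_iff f hf)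

theorem integralUnits_integralClosure_le :
    integralUnits (integralClosure A B) B ≤ integralUnits A B :=
  fun _ hu => ⟨isIntegral_trans _ hu.1, isIntegral_trans _ hu.2⟩

theorem integralUnits_inf_ker_unitsMap {K D E : Type*} [Field K] [CommRing D] [IsDomain D]
    [Algebra K D] [Ring E] [Nontrivial E] (f : D →+* E) :
    integralUnits K D ⊓ (Units.map (f : D →* E)).ker = ⊥ := by
  refine (Subgroup.eq_bot_iff_forall _).2 fun u ⟨hu, hker⟩ => ?_
  have map_sub_one : f ((u : D) - 1) = 0 := by
    rw [map_sub, map_one, sub_eq_zero]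
    exact congrArg Units.val hker
  by_contra hne
  have sub_one_ne_zero : (u : D) - 1 ≠ 0 := sub_ne_zero.2 fun h => hne (Units.ext h)
  have isUnit_sub_one : IsUnit ((u : D) - 1) :=
    (hu.1.sub isIntegral_one).isUnit sub_one_ne_zero
  exact (isUnit_sub_one.map f).ne_zero map_sub_one

end IntegralUnits

section Valuation

theorem valuation_le_one_of_isIntegral {A B Γ : Type*} [CommRing A] [CommRing B] [Algebra A B]
    [LinearOrderedCommGroupWithZero Γ] {v : Valuation B Γ}
    (hv : ∀ a : A, v (algebraMap A B a) ≤ 1) {y : B} (hy : IsIntegral A y) : v y ≤ 1 := by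
  refine (Valuation.integer.integers v).mem_of_integral (x := y) ?_
  exact hy.map_of_comp_eq ((algebraMap A B).codRestrict v.integer hv) (RingHom.id B) rfl

variable {A F : Type*} [CommRing A] [Field F] [Algebra A F]

theorem mem_valuationSubring_of_isIntegral {V : ValuationSubring F}
    (hV : ∀ a : A, algebraMap A F a ∈ V) {y : F} (hy : IsIntegral A y) : y ∈ V :=
  (V.valuation_le_one_iff y).1 <|
    valuation_le_one_of_isIntegral (fun a => (V.valuation_le_one_iff _).2 (hV a)) hy

theorem isIntegral_of_isIntegral_adjoin_of_isIntegral_adjoin_inv {x y : F}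
    (h : IsIntegral (Algebra.adjoin A {x}) y) (h' : IsIntegral (Algebra.adjoin A {x⁻¹}) y) :
    IsIntegral A y := by
  by_contra hy
  obtain ⟨V, hAV, hyV⟩ := Subring.exists_le_valuationSubring_of_isIntegrallyClosedIn
    (R := (integralClosure A F).toSubring) (x := y) hy
  have adjoin_le {z : F} (hz : z ∈ V) (a : Algebra.adjoin A {z}) : (a : F) ∈ V :=
    Algebra.adjoin_induction (p := fun b _ => b ∈ V)
      (fun _ hb => Set.mem_singleton_iff.1 hb ▸ hz) (fun _ => hAV isIntegral_algebraMap)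
      (fun _ _ _ _ => add_mem) (fun _ _ _ _ => mul_mem) a.2
  rcases V.mem_or_inv_mem x with hx | hx
  · exact hyV (mem_valuationSubring_of_isIntegral (adjoin_le hx) h)
  · exact hyV (mem_valuationSubring_of_isIntegral (adjoin_le hx) h')

theorem integralUnits_adjoin_inf_integralUnits_adjoin_inv_le (x : F) :
    integralUnits (Algebra.adjoin A {x}) F ⊓ integralUnits (Algebra.adjoin A {x⁻¹}) F ≤
      integralUnits A F :=
  fun _ ⟨h, h'⟩ =>
    ⟨isIntegral_of_isIntegral_adjoin_of_isIntegral_adjoin_inv h.1 h'.1,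
      isIntegral_of_isIntegral_adjoin_of_isIntegral_adjoin_inv h.2 h'.2⟩

end Valuation

section Dedekind

variable {A F : Type*} [CommRing A] [Algebra.FiniteType ℤ A] [Field F] [Algebra A F]

variable (A F) in
theorem finite_setOf_exists_one_lt_valuation (D : Type*) [CommRing D] [IsDedekindDomain D]
    [Algebra D F] [IsFractionRing D F] :
    {v : HeightOneSpectrum D | ∃ a : A, 1 < v.valuation F (algebraMap A F a)}.Finite := by
  obtain ⟨s, hs⟩ := ‹Algebra.FiniteType ℤ A›
  refine (s.finite_toSet.biUnion fun a _ =>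
    HeightOneSpectrum.Support.finite D (algebraMap A F a)).subset fun v ⟨a, ha⟩ => ?_
  by_contra hv
  simp only [Set.mem_iUnion, not_exists] at hv
  have adjoin_le : Algebra.adjoin ℤ (s : Set A) ≤
      subalgebraOfSubring ((v.valuation F).integer.comap (algebraMap A F)) :=
    Algebra.adjoin_le fun b hb => (not_lt.1 (hv b hb) : v.valuation F (algebraMap A F b) ≤ 1)
  exact ha.not_ge (adjoin_le (hs ▸ Algebra.mem_top))

theorem fg_of_inf_integralUnits_fg (D : Type*) [CommRing D] [IsDedekindDomain D] [Algebra D F]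
    [IsFractionRing D F] {U : Subgroup Fˣ} (hU : U ≤ integralUnits A F)
    (hUD : (U ⊓ integralUnits D F).FG) : U.FG := by
  let S := {v : HeightOneSpectrum D | ∃ a : A, 1 < v.valuation F (algebraMap A F a)}
  have : Finite S := finite_setOf_exists_one_lt_valuation A F D
  let Φ : Fˣ →* (S → (WithZero (Multiplicative ℤ))ˣ) :=
    MonoidHom.pi fun v => Units.map (v.1.valuation F : F →* WithZero (Multiplicative ℤ))
  have : Group.FG (WithZero (Multiplicative ℤ))ˣ :=
    Group.fg_of_surjective (f := WithZero.unitsWithZeroEquiv.symm.toMonoidHom)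
      WithZero.unitsWithZeroEquiv.symm.surjective
  have isIntegral_of_mem_ker {u : Fˣ} (hu : u ∈ U ⊓ Φ.ker) : IsIntegral D (u : F) := by
    obtain ⟨d, hd⟩ := HeightOneSpectrum.mem_integers_of_valuation_le_one F (u : F) fun v => by
      by_cases hv : v ∈ S
      · exact (congrArg Units.val (congrFun hu.2 ⟨v, hv⟩)).le
      · have hv' : ∀ a : A, v.valuation F (algebraMap A F a) ≤ 1 := by
          simpa only [S, Set.mem_ofPred_eq, not_exists, not_lt] using hv
        exact valuation_le_one_of_isIntegral hv' (hU hu.1).1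
    exact hd ▸ isIntegral_algebraMap
  refine subgroup_fg_of_map_of_inf_ker Φ (subgroup_fg_of_le (Group.fg_def.1 inferInstance) le_top)
    (subgroup_fg_of_le hUD fun u hu => ⟨hu.1, ?_⟩)
  exact ⟨isIntegral_of_mem_ker hu, isIntegral_of_mem_ker (inv_mem hu)⟩

theorem fg_of_inf_integralUnits_fg_of_integralClosure (R : Type*) [CommRing R] [Algebra R F]
    [IsDedekindDomain (integralClosure R F)] [IsFractionRing (integralClosure R F) F]
    {U : Subgroup Fˣ} (hU : U ≤ integralUnits A F) (hUR : (U ⊓ integralUnits R F).FG) : U.FG :=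
  fg_of_inf_integralUnits_fg (integralClosure R F) hU <|
    subgroup_fg_of_le hUR (inf_le_inf_left U integralUnits_integralClosure_le)

variable (A F) in
theorem integralUnits_fg_of_numberField [NumberField F] : (integralUnits A F).FG := by
  have : Group.FG (NumberField.RingOfIntegers F)ˣ := Group.fg_iff_monoid_fg.2 inferInstance
  have dirichlet : (integralUnits ℤ F).FG := integralUnits_fg_iff.2 this
  have : IsDedekindDomain (integralClosure ℤ F) :=
    inferInstanceAs (IsDedekindDomain (NumberField.RingOfIntegers F))
  have : IsFractionRing (integralClosure ℤ F) F :=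
    inferInstanceAs (IsFractionRing (NumberField.RingOfIntegers F) F)
  exact fg_of_inf_integralUnits_fg_of_integralClosure ℤ le_rfl
    (subgroup_fg_of_le dirichlet inf_le_right)

end Dedekind

section Adjoin

theorem fg_adjoin_range_algebraMap (A K B : Type*) [CommRing A] [Algebra.FiniteType ℤ A]
    [CommRing K] [CommRing B] [Algebra K B] [Algebra A B] :
    (Algebra.adjoin K (Set.range (algebraMap A B))).FG := by
  obtain ⟨s, hs⟩ := ‹Algebra.FiniteType ℤ A›
  have range_eq : Set.range (algebraMap A B) = Algebra.adjoin ℤ (algebraMap A B '' s) := by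
    have := (algebraMap A B).toIntAlgHom.map_adjoin s
    rw [hs, Algebra.map_top] at this
    exact congrArg SetLike.coe this
  rw [range_eq, Algebra.adjoin_adjoin_of_tower]
  exact Subalgebra.fg_def.2 ⟨_, s.finite_toSet.image _, rfl⟩

variable {K L : Type*} [Field K] [Field L] [Algebra K L]

theorem isPrincipalIdealRing_adjoin_singleton (x : L) :
    IsPrincipalIdealRing (Algebra.adjoin K {x}) := by
  rw [Algebra.adjoin_singleton_eq_range_aeval]
  exact .of_surjective _ (Polynomial.aeval (R := K) x).rangeRestrict_surjective

theorem adjoin_simple_inv (x : L) : K⟮x⁻¹⟯ = K⟮x⟯ := by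
  have adjoin_inv_le (z : L) : K⟮z⁻¹⟯ ≤ K⟮z⟯ :=
    IntermediateField.adjoin_simple_le_iff.2
      (inv_mem (IntermediateField.mem_adjoin_simple_self K z))
  exact (adjoin_inv_le x).antisymm (by simpa only [inv_inv] using adjoin_inv_le x⁻¹)

theorem adjoin_simple_gen_eq_top (x : L) : K⟮IntermediateField.AdjoinSimple.gen K x⟯ = ⊤ := by
  apply IntermediateField.lift_injective
  rw [IntermediateField.lift_adjoin_simple, IntermediateField.lift_top]
  rfl

theorem finiteDimensional_adjoin_algebraMap_gen (x : L) (M : Type*) [Field M] [Algebra K M]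
    [Algebra K⟮x⟯ M] [IsScalarTower K K⟮x⟯ M] [FiniteDimensional K⟮x⟯ M] :
    FiniteDimensional K⟮algebraMap K⟮x⟯ M (IntermediateField.AdjoinSimple.gen K x)⟯ M := by
  have : FiniteDimensional K⟮IntermediateField.AdjoinSimple.gen K x⟯ K⟮x⟯ := by
    rw [adjoin_simple_gen_eq_top]
    exact .top_left _ _
  have : FiniteDimensional K⟮IntermediateField.AdjoinSimple.gen K x⟯ M := .trans _ K⟮x⟯ _
  exact .of_restrictScalars_finite K⟮IntermediateField.AdjoinSimple.gen K x⟯ _ _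

variable (x : L) [FiniteDimensional K⟮x⟯ L] [Algebra.IsSeparable K⟮x⟯ L]

theorem fg_restrictScalars_integralClosure_adjoin :
    ((integralClosure (Algebra.adjoin K {x}) L).restrictScalars K).FG := by
  have := isPrincipalIdealRing_adjoin_singleton (K := K) x
  have : Module.Finite (Algebra.adjoin K {x}) (integralClosure (Algebra.adjoin K {x}) L) :=
    IsIntegralClosure.finite _ K⟮x⟯ L _
  have : Algebra.FiniteType K (Algebra.adjoin K {x}) :=
    .adjoin_of_finite (Set.finite_singleton x)
  have : Algebra.FiniteType K (integralClosure (Algebra.adjoin K {x}) L) :=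
    .trans (S := Algebra.adjoin K {x}) inferInstance inferInstance
  exact (Subalgebra.fg_iff_finiteType _).2 this

theorem fg_of_inf_integralUnits_adjoin_fg {A : Type*} [CommRing A] [Algebra.FiniteType ℤ A]
    [Algebra A L] {U : Subgroup Lˣ} (hU : U ≤ integralUnits A L)
    (hUx : (U ⊓ integralUnits (Algebra.adjoin K {x}) L).FG) : U.FG := by
  have := isPrincipalIdealRing_adjoin_singleton (K := K) x
  have : IsDedekindDomain (integralClosure (Algebra.adjoin K {x}) L) :=
    integralClosure.isDedekindDomain _ K⟮x⟯ L
  have : IsFractionRing (integralClosure (Algebra.adjoin K {x}) L) L :=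
    integralClosure.isFractionRing_of_finite_extension K⟮x⟯ L
  exact fg_of_inf_integralUnits_fg_of_integralClosure _ hU hUx

end Adjoin

section FiniteExtensions

universe u

/-- The property carried through the induction on the generators of a field: the units integral
over `A` form a finitely generated group in every finite extension `L` of `K`. No compatibility
is imposed between the two algebra structures on `L`. -/
def HasFGIntegralUnits (A : Type*) [CommRing A] (K : Type u) [Field K] : Prop :=
  ∀ (L : Type u) [Field L] [Algebra K L] [FiniteDimensional K L] [Algebra A L],
    (integralUnits A L).FG

variable {A : Type*} [CommRing A] {K L : Type u} [Field K] [Field L] [Algebra K L]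

theorem HasFGIntegralUnits.inf_fg_of_finiteType (hK : HasFGIntegralUnits A K) (C : Type u)
    [CommRing C] [IsDomain C] [Algebra K C] [Algebra.FiniteType K C] [Algebra A C] :
    (integralUnits A C ⊓ integralUnits K C).FG := by
  obtain ⟨m, hm⟩ := Ideal.exists_maximal C
  let := Ideal.Quotient.field m
  have : FiniteDimensional K (C ⧸ m) := finite_of_finite_type_of_isJacobsonRing K (C ⧸ m)
  refine subgroup_fg_of_map_of_inf_ker (Units.map (Ideal.Quotient.mk m : C →* C ⧸ m))
    (subgroup_fg_of_le (hK (C ⧸ m)) ?_) ?_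
  · exact (Subgroup.map_mono inf_le_left).trans (map_integralUnits_le (Ideal.Quotient.mkₐ A m))
  · rw [inf_assoc, integralUnits_inf_ker_unitsMap, inf_bot_eq]
    exact Subgroup.FG.bot

theorem HasFGIntegralUnits.inf_fg_of_subalgebra [Algebra A L] (hK : HasFGIntegralUnits A K)
    {C : Subalgebra K L} (hC : C.FG) (hAC : ∀ a : A, algebraMap A L a ∈ C)
    (hKC : ∀ y : L, IsIntegral K y → y ∈ C) :
    (integralUnits A L ⊓ integralUnits K L).FG := by
  let : Algebra A C := ((algebraMap A L).codRestrict C hAC).toAlgebra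
  have : IsScalarTower A C L := .of_algebraMap_eq fun _ => rfl
  have : Algebra.FiniteType K C := C.fg_iff_finiteType.1 hC
  refine subgroup_fg_of_le (subgroup_fg_map (hK.inf_fg_of_finiteType C)
    (Units.map (C.val : C →* L))) fun u ⟨huA, huK⟩ => ?_
  let w : Cˣ := ⟨⟨u, hKC _ huK.1⟩, ⟨_, hKC _ huK.2⟩, Subtype.ext u.mul_inv, Subtype.ext u.inv_mul⟩
  have hwA : w ∈ integralUnits A C :=
    (unitsMap_mem_integralUnits_iff (f := IsScalarTower.toAlgHom A C L)
      Subtype.val_injective).1 huA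
  have hwK : w ∈ integralUnits K C :=
    (unitsMap_mem_integralUnits_iff (f := C.val) Subtype.val_injective).1 huK
  exact ⟨w, ⟨hwA, hwK⟩, Units.ext rfl⟩

variable [Algebra.FiniteType ℤ A]

theorem HasFGIntegralUnits.inf_fg [Algebra A L] (hK : HasFGIntegralUnits A K) (x : L)
    [FiniteDimensional K⟮x⟯ L] [Algebra.IsSeparable K⟮x⟯ L] :
    (integralUnits A L ⊓ integralUnits K L).FG := by
  let C₀ := (integralClosure (Algebra.adjoin K {x}) L).restrictScalars K
  have hC₀ : C₀.FG := fg_restrictScalars_integralClosure_adjoin x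
  refine hK.inf_fg_of_subalgebra (hC₀.sup (fg_adjoin_range_algebraMap A K L))
    (fun a => ?_) fun y hy => ?_
  · exact Algebra.mem_sup_right (Algebra.subset_adjoin ⟨a, rfl⟩)
  · exact Algebra.mem_sup_left (hy.tower_top : IsIntegral (Algebra.adjoin K {x}) y)

theorem HasFGIntegralUnits.integralUnits_fg [Algebra A L] (hK : HasFGIntegralUnits A K) (x : L)
    [FiniteDimensional K⟮x⟯ L] [Algebra.IsSeparable K⟮x⟯ L] : (integralUnits A L).FG := by
  have : FiniteDimensional K⟮x⁻¹⟯ L := by rwa [adjoin_simple_inv]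
  have : Algebra.IsSeparable K⟮x⁻¹⟯ L := by rwa [adjoin_simple_inv]
  refine fg_of_inf_integralUnits_adjoin_fg (K := K) x le_rfl <|
    fg_of_inf_integralUnits_adjoin_fg (A := A) (K := K) x⁻¹ inf_le_left <|
      subgroup_fg_of_le (hK.inf_fg x) ?_
  rw [inf_assoc]
  exact inf_le_inf_left _ (integralUnits_adjoin_inf_integralUnits_adjoin_inv_le x)

theorem HasFGIntegralUnits.adjoin_simple [CharZero L] (hK : HasFGIntegralUnits A K) (x : L) :
    HasFGIntegralUnits A K⟮x⟯ := by
  intro M _ _ _ _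
  let : Algebra K M := ((algebraMap K⟮x⟯ M).comp (algebraMap K K⟮x⟯)).toAlgebra
  have : IsScalarTower K K⟮x⟯ M := .of_algebraMap_eq fun _ => rfl
  have : CharZero M := charZero_of_injective_algebraMap (algebraMap K⟮x⟯ M).injective
  let y := algebraMap K⟮x⟯ M (IntermediateField.AdjoinSimple.gen K x)
  have : FiniteDimensional K⟮y⟯ M := finiteDimensional_adjoin_algebraMap_gen x M
  exact hK.integralUnits_fg y

variable (A L)

theorem hasFGIntegralUnits_bot [CharZero L] :
    HasFGIntegralUnits A (⊥ : IntermediateField ℚ L) := by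
  intro M _ _ _ _
  have : CharZero M :=
    charZero_of_injective_algebraMap (algebraMap (⊥ : IntermediateField ℚ L) M).injective
  have : FiniteDimensional ℚ M := .trans ℚ (⊥ : IntermediateField ℚ L) M
  have : NumberField M := { }
  exact integralUnits_fg_of_numberField A M

theorem hasFGIntegralUnits_top [CharZero L] [Algebra.EssFiniteType ℚ L] :
    HasFGIntegralUnits A (⊤ : IntermediateField ℚ L) :=
  IntermediateField.induction_on_adjoin_fg (fun K => HasFGIntegralUnits A K)
    (hasFGIntegralUnits_bot A L) (fun _ x hK => hK.adjoin_simple x) ⊤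
    (IntermediateField.fg_top ℚ L)

end FiniteExtensions

theorem units_of_integral_closure_fg_general (A : Type*) [CommRing A] [Algebra.FiniteType ℤ A]
    (G : Type*) [Field G] [CharZero G] [Algebra A G] [Algebra.EssFiniteType A G] :
    Group.FG (integralClosure A G)ˣ := by
  have : Algebra.EssFiniteType ℤ G := .comp ℤ A G
  have : Algebra.EssFiniteType ℚ G := .of_comp ℤ ℚ G
  have : FiniteDimensional (⊤ : IntermediateField ℚ G) G := .top_left G G
  exact integralUnits_fg_iff.1 (hasFGIntegralUnits_top A G G)

/-- Let `A` be a domain with quotient field `L` of characteristic 0 which is integrally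
closed in `L` and finitely generated over ℤ as a ℤ-algebra, let `G` be a finite
extension of `L`, and let `A_G` be the integral closure of `A` in `G`. Then the group
`A_G*` of units of `A_G` is finitely generated. -/
theorem units_of_integral_closure_fg
    (A : Type*) [CommRing A] [IsDomain A] [IsIntegrallyClosed A] [Algebra.FiniteType ℤ A]
    (L : Type*) [Field L] [CharZero L] [Algebra A L] [IsFractionRing A L]
    (G : Type*) [Field G] [Algebra L G] [FiniteDimensional L G]
    [Algebra A G] [IsScalarTower A L G] :
    Group.FG (↥(integralClosure A G))ˣ := by
  have : CharZero G := charZero_of_injective_algebraMap (algebraMap L G).injective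
  have : Algebra.EssFiniteType A L := .of_isLocalization L (nonZeroDivisors A)
  have : Algebra.EssFiniteType A G := .comp A L G
  exact units_of_integral_closure_fg_general A G
end

section
/- Let A be an integrally closed domain with quotient field L of characteristic 0 which is finitely generated over ℤ as a ℤ-algebra, and K a finite extension of L of degree at least 3. Let α, β ∈ A_K (the integral closure of A in K) satisfy L(α) = L(β) = K, A[α] = A[β], and suppose α and β are L-equivalent. Then α and β are A-equivalent. -/
/-- Two elements `α, β` of `K` are `L`-equivalent if `β = u·α + a` for some `u ∈ L*`
and `a ∈ L`. -/
def LEquiv (L K : Type*) [Field L] [Field K] [Algebra L K] (α β : K) : Prop :=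
  ∃ u a : L, u ≠ 0 ∧ β = algebraMap L K u * α + algebraMap L K a

/-- Two elements `α, β` of the integral closure of `A` in `K` are `A`-equivalent if
`β = u·α + a` for some unit `u ∈ Aˣ` and some `a ∈ A`. -/
def AEquiv (A K : Type*) [CommRing A] [CommRing K] [Algebra A K] (α β : K) : Prop :=
  ∃ (u : Aˣ) (a : A), β = algebraMap A K u * α + algebraMap A K a

/-!
If `α ∉ L`, then `1` and `α` are linearly independent over `L`. As `A` is integrally closed, the
minimal polynomial of `α` over `L` is monic with coefficients in `A`, so reducing modulo it writes
each element of `A[α]` as a polynomial in `α` over `A` of degree less than `deg α`, and this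
expression is unique even over `L`. Hence the coefficients in `β = u α + a` lie in `A`; exchanging
`α` and `β` puts `u⁻¹` in `A` as well. If `α ∈ L`, then `α` and `β` both lie in `A`, and they
differ by a translation.
-/

theorem mem_range_algebraMap_of_isIntegral {A L B : Type*} [CommRing A] [IsIntegrallyClosed A]
    [CommRing L] [Algebra A L] [IsFractionRing A L] [Ring B] [Algebra L B] [FaithfulSMul L B]
    [Algebra A B] [IsScalarTower A L B] {x : B} (hx : IsIntegral A x)
    (hxL : x ∈ (algebraMap L B).range) : x ∈ (algebraMap A B).range := by
  obtain ⟨y, rfl⟩ := hxL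
  have hy : IsIntegral A y :=
    (isIntegral_algebraMap_iff (FaithfulSMul.algebraMap_injective L B)).1 hx
  obtain ⟨z, rfl⟩ := IsIntegrallyClosed.isIntegral_iff.1 hy
  exact ⟨z, IsScalarTower.algebraMap_apply A L B z⟩

section AdjoinIntegral

open Polynomial

variable {A L B : Type*} [CommRing A] [IsDomain A] [IsIntegrallyClosed A]
  [Field L] [Algebra A L] [IsFractionRing A L]
  [CommRing B] [IsDomain B] [Algebra L B] [Algebra A B] [IsScalarTower A L B]
  {x : B}

theorem mem_lifts_of_aeval_mem_adjoin (hx : IsIntegral A x) {p : L[X]}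
    (hdeg : p.degree < (minpoly L x).degree) (hp : aeval x p ∈ Algebra.adjoin A {x}) :
    p ∈ lifts (algebraMap A L) := by
  rw [Algebra.adjoin_singleton_eq_range_aeval] at hp
  obtain ⟨q, hq : aeval x q = aeval x p⟩ := hp
  have hmonic : (minpoly A x).Monic := minpoly.monic hx
  let r := q %ₘ minpoly A x
  have hr : aeval x (r.map (algebraMap A L)) = aeval x p := by
    rw [aeval_map_algebraMap, aeval_modByMonic_eq_self_of_root (minpoly.aeval A x), hq]
  have hrdeg : (r.map (algebraMap A L)).degree < (minpoly L x).degree := by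
    rw [minpoly.isIntegrallyClosed_eq_field_fractions' L hx, hmonic.degree_map]
    exact degree_map_le.trans_lt (degree_modByMonic_lt q hmonic)
  have hdvd : minpoly L x ∣ r.map (algebraMap A L) - p :=
    minpoly.dvd L x (by rw [map_sub, hr, sub_self])
  have hsub : r.map (algebraMap A L) - p = 0 :=
    eq_zero_of_dvd_of_degree_lt hdvd ((degree_sub_le _ _).trans_lt (max_lt hrdeg hdeg))
  exact ⟨r, sub_eq_zero.1 hsub⟩

theorem coeffs_mem_range_of_mul_add_mem_adjoin (hx : IsIntegral A x)
    (hxL : x ∉ (algebraMap L B).range) {u a : L}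
    (h : algebraMap L B u * x + algebraMap L B a ∈ Algebra.adjoin A {x}) :
    u ∈ (algebraMap A L).range ∧ a ∈ (algebraMap A L).range := by
  have hxint : IsIntegral L x := hx.tower_top
  have hdeg : (C u * X + C a).degree < (minpoly L x).degree := by
    refine degree_linear_le.trans_lt ?_
    rw [degree_eq_natDegree (minpoly.ne_zero hxint)]
    exact_mod_cast (minpoly.two_le_natDegree_iff hxint).2 hxL
  have hlift := (lifts_iff_coeff_lifts _).1
    (mem_lifts_of_aeval_mem_adjoin hx hdeg (by simpa using h))
  exact ⟨by simpa using hlift 1, by simpa using hlift 0⟩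

end AdjoinIntegral

theorem LEquiv.mem_range_algebraMap {L K : Type*} [Field L] [Field K] [Algebra L K] {α β : K}
    (h : LEquiv L K α β) (hα : α ∈ (algebraMap L K).range) : β ∈ (algebraMap L K).range := by
  obtain ⟨u, a, -, rfl⟩ := h
  exact add_mem (mul_mem ⟨u, rfl⟩ hα) ⟨a, rfl⟩

theorem AEquiv.of_mem_range_algebraMap {A K : Type*} [CommRing A] [CommRing K] [Algebra A K]
    {α β : K} (hα : α ∈ (algebraMap A K).range) (hβ : β ∈ (algebraMap A K).range) :
    AEquiv A K α β := by
  obtain ⟨x, rfl⟩ := hα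
  obtain ⟨y, rfl⟩ := hβ
  exact ⟨1, y - x, by simp⟩

theorem LEquiv_to_AEquiv_general {A L K : Type*} [CommRing A] [IsDomain A] [IsIntegrallyClosed A]
    [Field L] [Algebra A L] [IsFractionRing A L] [Field K] [Algebra L K] [Algebra A K]
    [IsScalarTower A L K] {α β : K} (hα : IsIntegral A α)
    (hO : Algebra.adjoin A {α} = Algebra.adjoin A {β}) (hLeq : LEquiv L K α β) :
    AEquiv A K α β := by
  have hβmem : β ∈ Algebra.adjoin A {α} := hO ▸ Algebra.self_mem_adjoin_singleton A β
  have hαmem : α ∈ Algebra.adjoin A {β} := hO ▸ Algebra.self_mem_adjoin_singleton A α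
  have hβ : IsIntegral A β := adjoin_le_integralClosure hα hβmem
  by_cases hαL : α ∈ (algebraMap L K).range
  · exact .of_mem_range_algebraMap (mem_range_algebraMap_of_isIntegral hα hαL)
      (mem_range_algebraMap_of_isIntegral hβ (hLeq.mem_range_algebraMap hαL))
  obtain ⟨u, a, hu, hβeq⟩ := hLeq
  have hαeq : α = algebraMap L K u⁻¹ * β + algebraMap L K (-(u⁻¹ * a)) := by
    have huK : algebraMap L K u ≠ 0 := (map_ne_zero _).2 hu
    rw [hβeq, map_neg, map_mul, map_inv₀, mul_add, inv_mul_cancel_left₀ huK, add_neg_cancel_right]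
  have hβL : β ∉ (algebraMap L K).range := fun hβL =>
    hαL (LEquiv.mem_range_algebraMap ⟨u⁻¹, _, inv_ne_zero hu, hαeq⟩ hβL)
  obtain ⟨⟨v, rfl⟩, ⟨b, rfl⟩⟩ := coeffs_mem_range_of_mul_add_mem_adjoin hα hαL (hβeq ▸ hβmem)
  obtain ⟨⟨w, hw⟩, -⟩ := coeffs_mem_range_of_mul_add_mem_adjoin hβ hβL (hαeq ▸ hαmem)
  have hvw : v * w = 1 := IsFractionRing.injective A L <| by
    rw [map_mul, hw, map_one, mul_inv_cancel₀ hu]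
  refine ⟨Units.mkOfMulEqOne v w hvw, b, ?_⟩
  simpa only [Units.val_mkOfMulEqOne, ← IsScalarTower.algebraMap_apply A L K] using hβeq

/-- Let `A` be an integrally closed domain with quotient field `L` of characteristic 0,
finitely generated over ℤ, and `K` a finite extension of `L` of degree at least 3. Let
`α, β` be integral over `A` with `L(α) = L(β) = K` and `A[α] = A[β]`, and suppose `α`
and `β` are `L`-equivalent. Then `α` and `β` are `A`-equivalent. -/
theorem LEquiv_to_AEquiv
    (A : Type*) [CommRing A] [IsDomain A] [IsIntegrallyClosed A] [Algebra.FiniteType ℤ A]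
    (L : Type*) [Field L] [CharZero L] [Algebra A L] [IsFractionRing A L]
    (K : Type*) [Field K] [Algebra L K] [FiniteDimensional L K]
    [Algebra A K] [IsScalarTower A L K]
    (hd : 3 ≤ Module.finrank L K)
    (α β : K) (hαint : IsIntegral A α) (hβint : IsIntegral A β)
    (hα : Algebra.adjoin L {α} = ⊤) (hβ : Algebra.adjoin L {β} = ⊤)
    (hO : Algebra.adjoin A {α} = Algebra.adjoin A {β})
    (hLeq : LEquiv L K α β) :
    AEquiv A K α β :=
  LEquiv_to_AEquiv_general hαint hO hLeq
end

section
/- Let A be an integrally closed domain with quotient field L of characteristic 0 which is finitely generated over ℤ as a ℤ-algebra, and K a finite extension of L of degree at least 3. Let α, β ∈ A_K (the integral closure of A in K) satisfy L(α) = L(β) = K and A[α] = A[β], and suppose there is a matrix (a1 a2; a3 a4) ∈ GL(2, L) with β = (a1·α + a2)/(a3·α + a4), a3 ≠ 0, a1, a2, a3, a4 ∈ A, and the ideal of A generated by a1, a2, a3, a4 equal to the unit ideal. Then (a1 a2; a3 a4) ∈ GL(2, A), i.e., a1·a4 − a2·a3 is a unit of A. -/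
/-!
Write `α = g(β)` and `β = h(α)` with `g, h ∈ A[X]`, and let `f` be the minimal polynomial of `β`
over `A`, so that a polynomial relation for `β` is a multiple of `f`. Suppose that the determinant
vanishes in a residue field `k` of `A`. The reduced matrix is nonzero, hence has rank one, and the
relation `β (a3 α + a4) = a1 α + a2` factors over `k` as `(t β - s) (u α + v) = 0`. If `u = 0`, this
is a linear equation for `β`. Otherwise `α - r` with `r = -v / u` divides `h(α) - h(r) = β - h(r)`,
so `(t β - s) (β - h(r)) = 0`. In both cases `f` has degree at most two modulo the maximal ideal.
-/

open Polynomial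

lemma C_mul_X_sub_C_ne_zero {R : Type*} [Ring R] {s t : R} (hst : ¬(s = 0 ∧ t = 0)) :
    C t * X - C s ≠ 0 := by
  intro h
  have ht : t = 0 := by simpa using congrArg (coeff · 1) h
  have hs : s = 0 := by simpa using congrArg (coeff · 0) h
  exact hst ⟨hs, ht⟩

lemma comp_sub_C_eval_dvd {R : Type*} [CommRing R] (h g : R[X]) (r : R) :
    g - C r ∣ h.comp g - C (h.eval r) := by
  simpa using map_dvd (compRingHom g) (X_sub_C_dvd_sub_C_eval (a := r) (p := h))

section Field

variable {k : Type*} [Field k]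

lemma exists_eq_mul_of_det_eq_zero {a b c d : k} (hdet : a * d - b * c = 0) :
    ∃ s t u v : k, a = s * u ∧ b = s * v ∧ c = t * u ∧ d = t * v := by
  by_cases hc : c = 0
  · by_cases hd : d = 0
    · exact ⟨1, 0, a, b, by simp [hc, hd]⟩
    · have ha : a = 0 := by simpa [hc, hd] using hdet
      exact ⟨b / d, 1, 0, d, by simp [ha, hc, hd]⟩
  · refine ⟨a / c, 1, c, d, by field_simp, ?_, by simp, by simp⟩
    field_simp
    linear_combination -hdet

lemma natDegree_le_two_of_dvd_mul {f g h : k[X]} {s t u v : k}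
    (hst : ¬(s = 0 ∧ t = 0)) (huv : ¬(u = 0 ∧ v = 0)) (hcomp : f ∣ X - h.comp g)
    (hmul : f ∣ (C t * X - C s) * (C u * g + C v)) :
    f.natDegree ≤ 2 := by
  have hlin : C t * X - C s ≠ 0 := C_mul_X_sub_C_ne_zero hst
  have hlin_deg : (C t * X - C s).natDegree ≤ 1 := by compute_degree
  by_cases hu : u = 0
  · have hv : IsUnit (C v) := isUnit_C.mpr (Ne.isUnit fun hv ↦ huv ⟨hu, hv⟩)
    have hdvd : f ∣ C t * X - C s := by
      rwa [hu, C_0, zero_mul, zero_add, hv.dvd_mul_right] at hmul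
    exact (natDegree_le_of_dvd hdvd hlin).trans (hlin_deg.trans one_le_two)
  · set r : k := -v / u with hr
    have hfactor : C u * g + C v = C u * (g - C r) := by
      have hv : v = -(u * r) := by rw [hr]; field_simp
      rw [hv, C_neg, C_mul]
      ring
    have hroot : f ∣ (C t * X - C s) * (g - C r) := by
      rwa [hfactor, mul_left_comm, (isUnit_C.mpr (Ne.isUnit hu)).dvd_mul_left] at hmul
    have hquad : f ∣ (C t * X - C s) * (X - C (h.eval r)) := by
      have heval : f ∣ (C t * X - C s) * (h.comp g - C (h.eval r)) :=
        hroot.trans (mul_dvd_mul_left _ (comp_sub_C_eval_dvd h g r))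
      convert dvd_add (hcomp.mul_left (C t * X - C s)) heval using 1
      ring
    calc f.natDegree
        ≤ ((C t * X - C s) * (X - C (h.eval r))).natDegree :=
          natDegree_le_of_dvd hquad (mul_ne_zero hlin (X_sub_C_ne_zero _))
      _ ≤ (C t * X - C s).natDegree + (X - C (h.eval r)).natDegree := natDegree_mul_le
      _ ≤ 2 := by rw [natDegree_X_sub_C]; lia

lemma det_ne_zero_of_dvd {f g h : k[X]} {a b c d : k} (hdeg : 3 ≤ f.natDegree)
    (hcomp : f ∣ X - h.comp g) (hdvd : f ∣ X * (C c * g + C d) - (C a * g + C b))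
    (hspan : Ideal.span {a, b, c, d} = ⊤) :
    a * d - b * c ≠ 0 := by
  intro hdet
  obtain ⟨s, t, u, v, rfl, rfl, rfl, rfl⟩ := exists_eq_mul_of_det_eq_zero hdet
  have hst : ¬(s = 0 ∧ t = 0) := by
    rintro ⟨rfl, rfl⟩
    simp at hspan
  have huv : ¬(u = 0 ∧ v = 0) := by
    rintro ⟨rfl, rfl⟩
    simp at hspan
  have hmul : f ∣ (C t * X - C s) * (C u * g + C v) := by
    convert hdvd using 1
    simp only [C_mul]
    ring
  have := natDegree_le_two_of_dvd_mul hst huv hcomp hmul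
  lia

end Field

section CommRing

variable {A : Type*} [CommRing A]

lemma isUnit_of_forall_isMaximal_quotient_mk_ne_zero {x : A}
    (hx : ∀ p : Ideal A, p.IsMaximal → Ideal.Quotient.mk p x ≠ 0) : IsUnit x := by
  by_contra hunit
  obtain ⟨p, hp, hmem⟩ := exists_max_ideal_of_mem_nonunits hunit
  exact hx p hp (Ideal.Quotient.eq_zero_iff_mem.mpr hmem)

lemma isUnit_det_of_monic_dvd {f g h : A[X]} {a b c d : A} (hf : f.Monic)
    (hdeg : 3 ≤ f.natDegree) (hcomp : f ∣ X - h.comp g)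
    (hdvd : f ∣ X * (C c * g + C d) - (C a * g + C b))
    (hspan : Ideal.span {a, b, c, d} = ⊤) :
    IsUnit (a * d - b * c) := by
  refine isUnit_of_forall_isMaximal_quotient_mk_ne_zero fun p hp ↦ ?_
  let _ : Field (A ⧸ p) := Ideal.Quotient.field p
  let π := Ideal.Quotient.mk p
  have hdeg_map : 3 ≤ (f.map π).natDegree := by rwa [hf.natDegree_map]
  have hcomp_map : f.map π ∣ X - (h.map π).comp (g.map π) := by
    simpa [Polynomial.map_comp] using Polynomial.map_dvd π hcomp
  have hdvd_map : f.map π ∣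
      X * (C (π c) * g.map π + C (π d)) - (C (π a) * g.map π + C (π b)) := by
    simpa using Polynomial.map_dvd π hdvd
  have hspan_map : Ideal.span {π a, π b, π c, π d} = ⊤ := by
    simpa only [Ideal.map_span, Set.image_insert_eq, Set.image_singleton] using
      (congrArg (Ideal.map π) hspan).trans (Ideal.map_top π)
  simpa using det_ne_zero_of_dvd hdeg_map hcomp_map hdvd_map hspan_map

theorem matrix_is_in_GL2A_general {B : Type*} [Ring B] [Algebra A B] {α β : B} {f : A[X]}
    (hf : f.Monic) (hdeg : 3 ≤ f.natDegree) (hker : ∀ q : A[X], aeval β q = 0 → f ∣ q)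
    (hO : Algebra.adjoin A {α} = Algebra.adjoin A {β}) {a1 a2 a3 a4 : A}
    (hrel : β * (algebraMap A B a3 * α + algebraMap A B a4) =
      algebraMap A B a1 * α + algebraMap A B a2)
    (hideal : Ideal.span {a1, a2, a3, a4} = ⊤) :
    IsUnit (a1 * a4 - a2 * a3) := by
  obtain ⟨g, hg⟩ : ∃ g : A[X], aeval β g = α :=
    Algebra.adjoin_mem_exists_aeval A β (hO ▸ Algebra.self_mem_adjoin_singleton A α)
  obtain ⟨h, hh⟩ : ∃ h : A[X], aeval α h = β :=
    Algebra.adjoin_mem_exists_aeval A α (hO ▸ Algebra.self_mem_adjoin_singleton A β)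
  have hcomp : f ∣ X - h.comp g := hker _ (by simp [aeval_comp, hg, hh])
  have hdvd : f ∣ X * (C a3 * g + C a4) - (C a1 * g + C a2) := hker _ (by simp [hg, hrel])
  exact isUnit_det_of_monic_dvd hf hdeg hcomp hdvd hideal

end CommRing

lemma natDegree_minpoly_eq_finrank_of_adjoin_eq_top {A : Type*} [CommRing A]
    [IsIntegrallyClosed A] (L : Type*) [Field L] [Algebra A L] [IsFractionRing A L]
    {B : Type*} [CommRing B] [IsDomain B] [Algebra L B] [Algebra A B] [IsScalarTower A L B]
    {x : B} (hint : IsIntegral A x) (hx : Algebra.adjoin L {x} = ⊤) :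
    (minpoly A x).natDegree = Module.finrank L B := by
  have : IsDomain A := (IsFractionRing.injective A L).isDomain
  calc (minpoly A x).natDegree
      = (minpoly L x).natDegree := by
        rw [minpoly.isIntegrallyClosed_eq_field_fractions' L hint,
          (minpoly.monic hint).natDegree_map]
    _ = Module.finrank L B := (PowerBasis.ofAdjoinEqTop' hint.tower_top hx).finrank.symm

/-- Let `A` be an integrally closed domain with quotient field `L` of characteristic 0,
finitely generated over ℤ, and `K` a finite extension of `L` of degree at least 3. Let
`α, β` be integral over `A` with `L(α) = L(β) = K` and `A[α] = A[β]`, and suppose there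
is a matrix `(a1 a2; a3 a4) ∈ GL(2, L)` with `β = (a1·α + a2)/(a3·α + a4)`, `a3 ≠ 0`,
`a1, a2, a3, a4 ∈ A` and `(a1, a2, a3, a4) = (1)`. Then `a1·a4 − a2·a3` is a unit
of `A`, i.e. the matrix lies in `GL(2, A)`. -/
theorem matrix_is_in_GL2A
    (A : Type*) [CommRing A] [IsDomain A] [IsIntegrallyClosed A] [Algebra.FiniteType ℤ A]
    (L : Type*) [Field L] [CharZero L] [Algebra A L] [IsFractionRing A L]
    (K : Type*) [Field K] [Algebra L K] [FiniteDimensional L K]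
    [Algebra A K] [IsScalarTower A L K]
    (hd : 3 ≤ Module.finrank L K)
    (α β : K) (hαint : IsIntegral A α) (hβint : IsIntegral A β)
    (hα : Algebra.adjoin L {α} = ⊤) (hβ : Algebra.adjoin L {β} = ⊤)
    (hO : Algebra.adjoin A {α} = Algebra.adjoin A {β})
    (a1 a2 a3 a4 : A)
    (hdet : a1 * a4 - a2 * a3 ≠ 0)
    (ha3 : a3 ≠ 0)
    (hβeq : β = (algebraMap A K a1 * α + algebraMap A K a2) /
                (algebraMap A K a3 * α + algebraMap A K a4))
    (hideal : Ideal.span {a1, a2, a3, a4} = (⊤ : Ideal A)) :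
    IsUnit (a1 * a4 - a2 * a3) := by
  have : Module.IsTorsionFree A K := .trans_faithfulSMul A L K
  have hdeg : 3 ≤ (minpoly A β).natDegree :=
    hd.trans_eq (natDegree_minpoly_eq_finrank_of_adjoin_eq_top L hβint hβ).symm
  have hβ_ne : β ≠ 0 := fun h ↦
    (minpoly.two_le_natDegree_iff hβint).mp (by lia) (h ▸ zero_mem _)
  have hden : algebraMap A K a3 * α + algebraMap A K a4 ≠ 0 := fun h ↦
    hβ_ne (by rw [hβeq, h, div_zero])
  exact matrix_is_in_GL2A_general (minpoly.monic hβint) hdeg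
    (fun _ ↦ minpoly.isIntegrallyClosed_dvd hβint) hO ((eq_div_iff hden).mp hβeq) hideal
end
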